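/- Let m, n ≥ 1, let b : Fin m → ZMod 2 and k : Fin m → ℕ with k i ≤ n for all i, and write M = M(b,k). Then the four stabilizer cosets M + S, (M + Z̄) + S, (M + X̄) + S, (M + Ȳ) + S of the n×m concatenated bit- and phase-flip repetition code are pairwise disjoint, and the weight enumerator of their union (the normalizer coset of M) equals ∏_{i} (h^{b i}_{k i, n}(x,y) + h^{b i}_{n−k i, n}(x,y)) + ∏_{i} (h^{1+b i}_{k i, n}(x,y) + h^{1+b i}_{n−k i, n}(x,y)) for all real x, y. -/

import Mathlib

/-!
The normalizer of the stabilizer group is the disjoint union of four classes: a string lies in the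
class `(c, d)` when every block has X-parity `c` and the constant Z-values `ζ i` of the blocks sum
to `d`. Translating these classes by a Pauli string `M` gives the four cosets in question.

For fixed `c`, the union over both values of `d` leaves the `ζ i` unconstrained, so it is a
Cartesian product over the blocks and its enumerator is a product. In one block the Z-part is that
of `M` or its complement, which accounts for the two summands of each factor; once the Z-part is
fixed, the constraint on the X-parity is resolved by expanding it in the characters of `ZMod 2`.
-/

/-- The weight of a Pauli string on qubits indexed by `Fin m × Fin n`. -/
def wt2 {m n : ℕ} (v : Fin m × Fin n → ZMod 2 × ZMod 2) : ℕ :=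
  (Finset.univ.filter fun p => v p ≠ (0, 0)).card

/-- The weight enumerator of a finite set of Pauli strings on `Fin m × Fin n`. -/
noncomputable def enum2 {m n : ℕ} (T : Finset (Fin m × Fin n → ZMod 2 × ZMod 2))
    (x y : ℝ) : ℝ :=
  ∑ v ∈ T, x ^ (m * n - wt2 v) * y ^ wt2 v

/-- The stabilizer group of the `n × m` concatenated bit- and phase-flip repetition code:
even X-weight in each block, Z-part constant within each block, and the block Z-values
sum to zero. -/
def concatStab (m n : ℕ) : Finset (Fin m × Fin n → ZMod 2 × ZMod 2) :=
  Finset.univ.filter fun v =>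
    (∀ i, ∑ j, (v (i, j)).1 = 0) ∧
    ∃ ζ : Fin m → ZMod 2, (∀ i j, (v (i, j)).2 = ζ i) ∧ ∑ i, ζ i = 0

/-- `M(b,k)`: block `i` has X-part `b i` at position 0 (and 0 elsewhere) and Z-part 1 at
positions `j < k i` (and 0 elsewhere). -/
def Mbk (m n : ℕ) (b : Fin m → ZMod 2) (k : Fin m → ℕ) :
    Fin m × Fin n → ZMod 2 × ZMod 2 :=
  fun p => (if (p.2 : ℕ) = 0 then b p.1 else 0, if (p.2 : ℕ) < k p.1 then 1 else 0)

/-- The logical-Z representative: Z-part 1 at every position of block 0. -/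
def ZbarC (m n : ℕ) : Fin m × Fin n → ZMod 2 × ZMod 2 :=
  fun p => (0, if (p.1 : ℕ) = 0 then 1 else 0)

/-- The logical-X representative: X-part 1 at position 0 of every block. -/
def XbarC (m n : ℕ) : Fin m × Fin n → ZMod 2 × ZMod 2 :=
  fun p => (if (p.2 : ℕ) = 0 then 1 else 0, 0)

/-- The logical-Y representative. -/
def YbarC (m n : ℕ) : Fin m × Fin n → ZMod 2 × ZMod 2 :=
  XbarC m n + ZbarC m n

noncomputable def fe (n : ℕ) (x y : ℝ) : ℝ := ((x + y) ^ n + (x - y) ^ n) / 2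

noncomputable def fo (n : ℕ) (x y : ℝ) : ℝ := ((x + y) ^ n - (x - y) ^ n) / 2

noncomputable def g (k n : ℕ) (x y : ℝ) : ℝ := (1 / 2) * (x + y) ^ (n - k) * (2 * y) ^ k

/-- `h^b_{k,n}`. -/
noncomputable def hpol (b : ZMod 2) (k n : ℕ) (x y : ℝ) : ℝ :=
  if k = 0 then (if b = 0 then fe n x y else fo n x y) else g k n x y

noncomputable def Fe (m : ℕ) (u w : Fin m → ℝ) : ℝ :=
  ((∏ i, (u i + w i)) + ∏ i, (u i - w i)) / 2

noncomputable def Fo (m : ℕ) (u w : Fin m → ℝ) : ℝ :=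
  ((∏ i, (u i + w i)) - ∏ i, (u i - w i)) / 2

open Finset

section ParitySums

lemma zmod_two_eq_zero_or_eq_one : ∀ a : ZMod 2, a = 0 ∨ a = 1 := by
  decide

lemma sum_univ_zmod_two {A : Type*} [AddCommMonoid A] (φ : ZMod 2 → A) :
    ∑ a, φ a = φ 0 + φ 1 :=
  Fin.sum_univ_two φ

variable {ι R : Type*}

lemma card_filter_not_eq_card_sub [Fintype ι] (p : ι → Prop) [DecidablePred p] :
    #{i | ¬ p i} = Fintype.card ι - #{i | p i} := by
  classical
  rw [← compl_filter, card_compl]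

lemma prod_ite_const_eq_pow_mul_pow [Fintype ι] [CommMonoid R] (p : ι → Prop) [DecidablePred p]
    (a b : R) :
    ∏ i, (if p i then a else b) = b ^ (Fintype.card ι - #{i | p i}) * a ^ #{i | p i} := by
  rw [prod_ite, prod_const, prod_const, card_filter_not_eq_card_sub, mul_comm]

variable [CommRing R]

variable (R) in
/-- The nontrivial additive character `a ↦ (-1) ^ a` of `ZMod 2`, with values in `R`. -/
def signChar : AddChar (ZMod 2) R :=
  AddChar.zmodChar 2 neg_one_sq

lemma signChar_one : signChar R 1 = -1 := by
  simp [signChar, AddChar.zmodChar_apply, ZMod.val_one]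

lemma signChar_sum (s : Finset ι) (u : ι → ZMod 2) :
    signChar R (∑ i ∈ s, u i) = ∏ i ∈ s, signChar R (u i) :=
  map_prod (signChar R).toMonoidHom (fun i => Multiplicative.ofAdd (u i)) s

lemma two_mul_ite_eq_add_signChar_mul (a β : ZMod 2) (r : R) :
    2 * (if a = β then r else 0) = r + signChar R β * (signChar R a * r) := by
  rcases zmod_two_eq_zero_or_eq_one a with rfl | rfl <;>
    rcases zmod_two_eq_zero_or_eq_one β with rfl | rfl <;> simp [signChar_one, two_mul]

lemma two_mul_sum_prod_of_sum_eq [Fintype ι] [DecidableEq ι] (f : ι → ZMod 2 → R) (β : ZMod 2) :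
    2 * ∑ u : ι → ZMod 2 with ∑ i, u i = β, ∏ i, f i (u i)
      = ∏ i, (f i 0 + f i 1) + signChar R β * ∏ i, (f i 0 - f i 1) := by
  calc 2 * ∑ u : ι → ZMod 2 with ∑ i, u i = β, ∏ i, f i (u i)
      = ∑ u : ι → ZMod 2, ∏ i, f i (u i)
          + signChar R β * ∑ u : ι → ZMod 2, ∏ i, signChar R (u i) * f i (u i) := by
        simp only [sum_filter, mul_sum, two_mul_ite_eq_add_signChar_mul, sum_add_distrib,
          signChar_sum, prod_mul_distrib]
    _ = ∏ i, ∑ a, f i a + signChar R β * ∏ i, ∑ a, signChar R a * f i a := by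
        rw [Fintype.prod_sum, Fintype.prod_sum]
    _ = ∏ i, (f i 0 + f i 1) + signChar R β * ∏ i, (f i 0 - f i 1) := by
        simp only [sum_univ_zmod_two, signChar_one, AddChar.map_zero_eq_one, one_mul,
          neg_one_mul, sub_eq_add_neg]

end ParitySums

section BlockEnumerator

variable {ι : Type*} [Fintype ι]

/-- The factor contributed to a weight enumerator by one qubit carrying the Pauli operator `a`: `x`
for the identity, encoded as `(0, 0)`, and `y` for each of the other three. -/
def pauliFactor {R : Type*} (x y : R) (a : ZMod 2 × ZMod 2) : R :=
  if a ≠ (0, 0) then y else x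

lemma two_mul_hpol (β : ZMod 2) (k n : ℕ) (x y : ℝ) :
    2 * hpol β k n x y
      = (x + y) ^ (n - k) * (2 * y) ^ k + signChar ℝ β * ((x - y) ^ (n - k) * 0 ^ k) := by
  rcases eq_or_ne k 0 with rfl | hk
  · rcases zmod_two_eq_zero_or_eq_one β with rfl | rfl
    · simp only [hpol, if_true, fe, AddChar.map_zero_eq_one, Nat.sub_zero, pow_zero]
      ring
    · simp only [hpol, if_true, one_ne_zero, if_false, fo, signChar_one, Nat.sub_zero, pow_zero]
      ring
  · simp only [hpol, hk, if_false, g, ne_eq, not_false_eq_true, zero_pow]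
    ring

lemma sum_prod_pauliFactor_of_sum_eq [DecidableEq ι] (β : ZMod 2) (z : ι → ZMod 2)
    (x y : ℝ) :
    ∑ u : ι → ZMod 2 with ∑ j, u j = β, ∏ j, pauliFactor x y (u j, z j)
      = hpol β #{j | z j ≠ 0} (Fintype.card ι) x y := by
  have factor_add (j : ι) : pauliFactor x y (0, z j) + pauliFactor x y (1, z j)
      = if z j ≠ 0 then 2 * y else x + y := by
    by_cases hz : z j = 0 <;> simp [pauliFactor, hz, two_mul]
  have factor_sub (j : ι) : pauliFactor x y (0, z j) - pauliFactor x y (1, z j)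
      = if z j ≠ 0 then 0 else x - y := by
    by_cases hz : z j = 0 <;> simp [pauliFactor, hz]
  apply mul_left_cancel₀ (two_ne_zero (α := ℝ))
  rw [two_mul_sum_prod_of_sum_eq fun j a => pauliFactor x y (a, z j), two_mul_hpol]
  simp only [factor_add, factor_sub, prod_ite_const_eq_pow_mul_pow]

/-- The Pauli strings on one block with X-parity `β` whose Z-part is `z` or its complement. -/
def blockCoset [DecidableEq ι] (β : ZMod 2) (z : ι → ZMod 2) : Finset (ι → ZMod 2 × ZMod 2) :=
  {w | ∑ j, (w j).1 = β ∧ ∃ ζ : ZMod 2, ∀ j, (w j).2 = z j + ζ}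

lemma mem_blockCoset [DecidableEq ι] {β : ZMod 2} {z : ι → ZMod 2} {w : ι → ZMod 2 × ZMod 2} :
    w ∈ blockCoset β z ↔ ∑ j, (w j).1 = β ∧ ∃ ζ : ZMod 2, ∀ j, (w j).2 = z j + ζ :=
  mem_filter_univ w

lemma sub_mem_blockCoset_zero_iff [DecidableEq ι] {β : ZMod 2} {w p : ι → ZMod 2 × ZMod 2} :
    w - p ∈ blockCoset β 0 ↔ w ∈ blockCoset (∑ j, (p j).1 + β) fun j => (p j).2 := by
  simp [mem_blockCoset, sum_sub_distrib, sub_eq_iff_eq_add']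

lemma sum_blockCoset [DecidableEq ι] [Nonempty ι] {A : Type*} [AddCommMonoid A] (β : ZMod 2)
    (z : ι → ZMod 2) (F : (ι → ZMod 2 × ZMod 2) → A) :
    ∑ w ∈ blockCoset β z, F w
      = ∑ ζ : ZMod 2, ∑ u : ι → ZMod 2 with ∑ j, u j = β, F fun j => (u j, z j + ζ) := by
  obtain ⟨j₀⟩ := ‹Nonempty ι›
  rw [← sum_product']
  symm
  refine sum_nbij' (fun p j => (p.2 j, z j + p.1))
    (fun w => ((w j₀).2 - z j₀, fun j => (w j).1)) ?_ ?_ ?_ ?_ fun _ _ => rfl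
  · rintro ⟨ζ, u⟩ hu
    exact mem_blockCoset.2 ⟨by simpa using hu, ζ, fun _ => rfl⟩
  · intro w hw
    simpa using (mem_blockCoset.1 hw).1
  · rintro ⟨ζ, u⟩ -
    simp
  · intro w hw
    obtain ⟨-, ζ, hζ⟩ := mem_blockCoset.1 hw
    funext j
    ext <;> simp [hζ]

lemma card_filter_add_one_ne_zero (z : ι → ZMod 2) :
    #{j | z j + 1 ≠ 0} = Fintype.card ι - #{j | z j ≠ 0} := by
  have add_one_ne_zero_iff : ∀ a : ZMod 2, a + 1 ≠ 0 ↔ ¬ a ≠ 0 := by decide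
  simp only [add_one_ne_zero_iff, card_filter_not_eq_card_sub]

lemma sum_prod_pauliFactor_blockCoset [DecidableEq ι] [Nonempty ι] (β : ZMod 2)
    (z : ι → ZMod 2) (x y : ℝ) :
    ∑ w ∈ blockCoset β z, ∏ j, pauliFactor x y (w j)
      = hpol β #{j | z j ≠ 0} (Fintype.card ι) x y
        + hpol β (Fintype.card ι - #{j | z j ≠ 0}) (Fintype.card ι) x y := by
  rw [sum_blockCoset, ← card_filter_add_one_ne_zero z]
  simp only [sum_univ_zmod_two, sum_prod_pauliFactor_of_sum_eq β fun j => z j + _, add_zero]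

end BlockEnumerator

section LogicalClasses

lemma mem_image_add_left_iff {G : Type*} [AddCommGroup G] [DecidableEq G] {T : Finset G}
    {a v : G} : v ∈ T.image (a + ·) ↔ v - a ∈ T := by
  simp [neg_add_eq_sub]

variable {m n : ℕ}

/-- The Pauli strings of the normalizer of `concatStab m n` in the logical class `X̄ᶜ Z̄ᵈ`: each
block has X-parity `c`, the Z-part is constant on each block, and the block Z-values sum to `d`. -/
def logicalClass (m n : ℕ) (c d : ZMod 2) : Finset (Fin m × Fin n → ZMod 2 × ZMod 2) :=
  {v | (∀ i, ∑ j, (v (i, j)).1 = c) ∧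
    ∃ ζ : Fin m → ZMod 2, (∀ i j, (v (i, j)).2 = ζ i) ∧ ∑ i, ζ i = d}

lemma mem_logicalClass {c d : ZMod 2} {v : Fin m × Fin n → ZMod 2 × ZMod 2} :
    v ∈ logicalClass m n c d ↔ (∀ i, ∑ j, (v (i, j)).1 = c) ∧
      ∃ ζ : Fin m → ZMod 2, (∀ i j, (v (i, j)).2 = ζ i) ∧ ∑ i, ζ i = d :=
  mem_filter_univ v

lemma logicalClass_zero_zero : logicalClass m n 0 0 = concatStab m n := rfl

lemma add_mem_logicalClass {c d c' d' : ZMod 2} {v w : Fin m × Fin n → ZMod 2 × ZMod 2}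
    (hv : v ∈ logicalClass m n c d) (hw : w ∈ logicalClass m n c' d') :
    v + w ∈ logicalClass m n (c + c') (d + d') := by
  obtain ⟨hvX, ζ, hvZ, hζ⟩ := mem_logicalClass.1 hv
  obtain ⟨hwX, η, hwZ, hη⟩ := mem_logicalClass.1 hw
  refine mem_logicalClass.2 ⟨fun i => ?_, ζ + η, fun i j => ?_, ?_⟩
  · simp [sum_add_distrib, hvX, hwX]
  · simp [hvZ, hwZ]
  · simp [sum_add_distrib, hζ, hη]

lemma image_add_concatStab {c d : ZMod 2} {L : Fin m × Fin n → ZMod 2 × ZMod 2}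
    (hL : L ∈ logicalClass m n c d) (M : Fin m × Fin n → ZMod 2 × ZMod 2) :
    (concatStab m n).image (fun s => (M + L) + s) = (logicalClass m n c d).image (M + ·) := by
  rw [← logicalClass_zero_zero]
  ext v
  simp only [mem_image]
  constructor
  · rintro ⟨s, hs, rfl⟩
    exact ⟨L + s, by simpa using add_mem_logicalClass hL hs, (add_assoc M L s).symm⟩
  · rintro ⟨w, hw, rfl⟩
    exact ⟨L + w, by simpa [CharTwo.add_self_eq_zero] using add_mem_logicalClass hL hw,
      by rw [add_assoc, ← add_assoc L, ZModModule.add_self, zero_add]⟩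

lemma disjoint_logicalClass [NeZero m] [NeZero n] {c d c' d' : ZMod 2}
    (h : (c, d) ≠ (c', d')) : Disjoint (logicalClass m n c d) (logicalClass m n c' d') := by
  refine disjoint_left.2 fun v hv hv' => h ?_
  obtain ⟨hX, ζ, hZ, hζ⟩ := mem_logicalClass.1 hv
  obtain ⟨hX', ζ', hZ', hζ'⟩ := mem_logicalClass.1 hv'
  obtain rfl : ζ = ζ' := funext fun i => (hZ i 0).symm.trans (hZ' i 0)
  rw [← hX 0, ← hX' 0, ← hζ, ← hζ']

lemma disjoint_image_add_logicalClass [NeZero m] [NeZero n] {c d c' d' : ZMod 2}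
    (h : (c, d) ≠ (c', d')) (M : Fin m × Fin n → ZMod 2 × ZMod 2) :
    Disjoint ((logicalClass m n c d).image (M + ·)) ((logicalClass m n c' d').image (M + ·)) :=
  (disjoint_image (add_right_injective M)).2 (disjoint_logicalClass h)

lemma ZbarC_mem_logicalClass [NeZero m] : ZbarC m n ∈ logicalClass m n 0 1 :=
  mem_logicalClass.2
    ⟨by simp [ZbarC], fun i => if (i : ℕ) = 0 then 1 else 0, fun _ _ => rfl, by simp⟩

lemma XbarC_mem_logicalClass [NeZero n] : XbarC m n ∈ logicalClass m n 1 0 :=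
  mem_logicalClass.2 ⟨by simp [XbarC], 0, fun _ _ => rfl, by simp⟩

lemma YbarC_mem_logicalClass [NeZero m] [NeZero n] : YbarC m n ∈ logicalClass m n 1 1 := by
  simpa [YbarC] using add_mem_logicalClass XbarC_mem_logicalClass ZbarC_mem_logicalClass

lemma enum2_union {T T' : Finset (Fin m × Fin n → ZMod 2 × ZMod 2)} (h : Disjoint T T')
    (x y : ℝ) : enum2 (T ∪ T') x y = enum2 T x y + enum2 T' x y :=
  sum_union h

lemma enum2_eq_sum_prod_pauliFactor (T : Finset (Fin m × Fin n → ZMod 2 × ZMod 2)) (x y : ℝ) :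
    enum2 T x y = ∑ v ∈ T, ∏ i, ∏ j, pauliFactor x y (v (i, j)) := by
  refine sum_congr rfl fun v _ => ?_
  rw [← Fintype.prod_prod_type fun p => pauliFactor x y (v p)]
  simp only [pauliFactor, prod_ite_const_eq_pow_mul_pow, Fintype.card_prod, Fintype.card_fin, wt2]

lemma mem_logicalClass_union_iff {c : ZMod 2} {v : Fin m × Fin n → ZMod 2 × ZMod 2} :
    v ∈ logicalClass m n c 0 ∪ logicalClass m n c 1
      ↔ ∀ i, (fun j => v (i, j)) ∈ blockCoset c 0 := by
  simp only [mem_union, mem_logicalClass, mem_blockCoset, Pi.zero_apply, zero_add]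
  constructor
  · rintro (⟨hX, ζ, hZ, -⟩ | ⟨hX, ζ, hZ, -⟩) <;> exact fun i => ⟨hX i, ζ i, hZ i⟩
  · intro h
    choose hX ζ hZ using h
    exact (zmod_two_eq_zero_or_eq_one (∑ i, ζ i)).imp (⟨hX, ζ, hZ, ·⟩) (⟨hX, ζ, hZ, ·⟩)

lemma enum2_image_add_logicalClass_union [NeZero n] (M : Fin m × Fin n → ZMod 2 × ZMod 2)
    (c : ZMod 2) (x y : ℝ) :
    enum2 ((logicalClass m n c 0 ∪ logicalClass m n c 1).image (M + ·)) x y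
      = ∏ i, (hpol (∑ j, (M (i, j)).1 + c) #{j | (M (i, j)).2 ≠ 0} n x y
          + hpol (∑ j, (M (i, j)).1 + c) (n - #{j | (M (i, j)).2 ≠ 0}) n x y) := by
  have block_enum (i : Fin m) := sum_prod_pauliFactor_blockCoset
    (∑ j, (M (i, j)).1 + c) (fun j => (M (i, j)).2) x y
  simp only [Fintype.card_fin] at block_enum
  have mem_coset_iff (v : Fin m × Fin n → ZMod 2 × ZMod 2) :
      v ∈ (logicalClass m n c 0 ∪ logicalClass m n c 1).image (M + ·) ↔ ∀ i, (fun j => v (i, j))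
        ∈ blockCoset (∑ j, (M (i, j)).1 + c) fun j => (M (i, j)).2 := by
    simp only [← sub_mem_blockCoset_zero_iff]
    rw [mem_image_add_left_iff, mem_logicalClass_union_iff]
    rfl
  rw [enum2_eq_sum_prod_pauliFactor]
  simp only [← block_enum, prod_univ_sum]
  exact sum_equiv (Equiv.curry _ _ _)
    (fun v => (mem_coset_iff v).trans Fintype.mem_piFinset.symm) fun _ _ => rfl

lemma sum_fst_Mbk [NeZero n] (b : Fin m → ZMod 2) (k : Fin m → ℕ) (i : Fin m) :
    ∑ j, (Mbk m n b k (i, j)).1 = b i := by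
  simp [Mbk]

lemma card_snd_Mbk_ne_zero (b : Fin m → ZMod 2) {k : Fin m → ℕ} {i : Fin m} (hk : k i ≤ n) :
    #{j | (Mbk m n b k (i, j)).2 ≠ 0} = k i := by
  simp [Mbk, Fin.card_filter_val_lt, hk]

end LogicalClasses

theorem weight_enumerator_normalizer_coset_concat_general (m n : ℕ) (hm : 1 ≤ m) (hn : 1 ≤ n)
    (M : Fin m × Fin n → ZMod 2 × ZMod 2) (b : Fin m → ZMod 2) (k : Fin m → ℕ)
    (hb : ∀ i, ∑ j, (M (i, j)).1 = b i) (hk : ∀ i, #{j | (M (i, j)).2 ≠ 0} = k i) (x y : ℝ) :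
    let C₁ := (concatStab m n).image fun s => M + s
    let C₂ := (concatStab m n).image fun s => (M + ZbarC m n) + s
    let C₃ := (concatStab m n).image fun s => (M + XbarC m n) + s
    let C₄ := (concatStab m n).image fun s => (M + YbarC m n) + s
    Disjoint C₁ C₂ ∧ Disjoint C₁ C₃ ∧ Disjoint C₁ C₄ ∧
    Disjoint C₂ C₃ ∧ Disjoint C₂ C₄ ∧ Disjoint C₃ C₄ ∧
    enum2 (C₁ ∪ C₂ ∪ C₃ ∪ C₄) x y
      = (∏ i, (hpol (b i) (k i) n x y + hpol (b i) (n - k i) n x y))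
        + ∏ i, (hpol (1 + b i) (k i) n x y + hpol (1 + b i) (n - k i) n x y) := by
  have : NeZero m := NeZero.of_pos hm
  have : NeZero n := NeZero.of_pos hn
  intro C₁ C₂ C₃ C₄
  have hC₁ : C₁ = (logicalClass m n 0 0).image (M + ·) := by rw [logicalClass_zero_zero]
  have hC₂ : C₂ = (logicalClass m n 0 1).image (M + ·) :=
    image_add_concatStab ZbarC_mem_logicalClass M
  have hC₃ : C₃ = (logicalClass m n 1 0).image (M + ·) :=
    image_add_concatStab XbarC_mem_logicalClass M
  have hC₄ : C₄ = (logicalClass m n 1 1).image (M + ·) :=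
    image_add_concatStab YbarC_mem_logicalClass M
  rw [union_assoc (C₁ ∪ C₂), hC₁, hC₂, hC₃, hC₄]
  have disjoint_coset {c d c' d' : ZMod 2} (h : (c, d) ≠ (c', d')) :=
    disjoint_image_add_logicalClass h M
  refine ⟨disjoint_coset (by decide), disjoint_coset (by decide), disjoint_coset (by decide),
    disjoint_coset (by decide), disjoint_coset (by decide), disjoint_coset (by decide), ?_⟩
  have enum_parity (c : ZMod 2) := enum2_image_add_logicalClass_union M c x y
  simp only [image_union, hb, hk] at enum_parity
  rw [enum2_union, enum_parity, enum_parity]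
  · simp only [add_zero, add_comm]
  · simp only [disjoint_union_left, disjoint_union_right]
    exact ⟨⟨disjoint_coset (by decide), disjoint_coset (by decide)⟩,
      disjoint_coset (by decide), disjoint_coset (by decide)⟩

theorem weight_enumerator_normalizer_coset_concat (m n : ℕ) (hm : 1 ≤ m) (hn : 1 ≤ n)
    (b : Fin m → ZMod 2) (k : Fin m → ℕ) (hk : ∀ i, k i ≤ n) (x y : ℝ) :
    let M := Mbk m n b k
    let C₁ := (concatStab m n).image fun s => M + s
    let C₂ := (concatStab m n).image fun s => (M + ZbarC m n) + s
    let C₃ := (concatStab m n).image fun s => (M + XbarC m n) + s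
    let C₄ := (concatStab m n).image fun s => (M + YbarC m n) + s
    Disjoint C₁ C₂ ∧ Disjoint C₁ C₃ ∧ Disjoint C₁ C₄ ∧
    Disjoint C₂ C₃ ∧ Disjoint C₂ C₄ ∧ Disjoint C₃ C₄ ∧
    enum2 (C₁ ∪ C₂ ∪ C₃ ∪ C₄) x y
      = (∏ i, (hpol (b i) (k i) n x y + hpol (b i) (n - k i) n x y))
        + ∏ i, (hpol (1 + b i) (k i) n x y + hpol (1 + b i) (n - k i) n x y) := by
  have : NeZero n := NeZero.of_pos hn
  exact weight_enumerator_normalizer_coset_concat_general m n hm hn (Mbk m n b k) b k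
    (sum_fst_Mbk b k) (fun i => card_snd_Mbk_ne_zero b (hk i)) x y
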